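/- arXiv:2403.14162 — 4 statements merged into one kernel-verified Lean document; each statement's English description precedes it below -/
import Mathlib

section
/- Let m = √(2/(1+e²)) and M = e·√(2/(1+e²)), and let α be a real number with m < α < M. Define r_α = α − m if m < α ≤ (1+e)/√(2(1+e²)), and r_α = M − α if (1+e)/√(2(1+e²)) ≤ α < M. Then the open disk {w ∈ ℂ : |w − α| < r_α} is contained in 𝔅(𝔻); that is, for every w with |w − α| < r_α there exists z ∈ 𝔻 with 𝔅(z) = w. -/
open Complex Metric

/-- The bean function 𝔅(z) = (1 + tanh z)^(1/2), principal branch of the complex power. -/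
noncomputable def Bean (z : ℂ) : ℂ := (1 + Complex.tanh z) ^ ((1:ℂ)/2)

/-- The open unit disk in ℂ. -/
def unitDisk : Set ℂ := Metric.ball (0:ℂ) 1

/-- `Subord p g` : p is subordinate to g on the unit disk. -/
def Subord (p g : ℂ → ℂ) : Prop :=
  ∃ ω : ℂ → ℂ, AnalyticOnNhd ℂ ω unitDisk ∧ ω 0 = 0 ∧
    (∀ z ∈ unitDisk, ‖ω z‖ < 1) ∧ ∀ z ∈ unitDisk, p z = g (ω z)

/-!
Put `k = 1 / cosh 1`. The real points `m = 𝔅(-1)` and `M = 𝔅(1)` satisfy `m M = k` and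
`m² + M² = 2`. Every disk of the theorem lies in the disk with diameter `(m, M)`, which is
`|w|² + k < (m + M) Re w`; squaring, `u = w²` satisfies `(|u| + k)² < (1 + k) (|u| + Re u)`.
Every `u ≠ 0, 2` is `1 + tanh z` for some `z` with `|Im z| ≤ π / 2`, so it suffices that the
reverse inequality holds when `z = a + i b` has modulus at least `1`. Since `|cosh z| ≤ cosh a`,
that reduces to `sinh² 1 - sinh² a ≤ sin² b (sinh² 1 + cosh 1)`. For `|a| ≤ 1`, compare `sinh² a`
with its tangent at `1` as a function of `a²`, and `sin |b| ≥ sin √(1 - a²)` with the chord of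
`sin` over `[0, 1]`: what remains is `sinh 1 cosh 1 ≤ sin² 1 (sinh² 1 + cosh 1)`.
-/

theorem mul_map_le_mul_map_of_convexOn {𝕜 : Type*} [Field 𝕜] [LinearOrder 𝕜]
    [IsStrictOrderedRing 𝕜] {s : Set 𝕜} {f : 𝕜 → 𝕜} {x y : 𝕜} (hf : ConvexOn 𝕜 s f)
    (h0 : 0 ∈ s) (hf0 : f 0 ≤ 0) (hy : y ∈ s) (hx0 : 0 ≤ x) (hxy : x ≤ y) :
    y * f x ≤ x * f y := by
  obtain rfl | hy0 := (hx0.trans hxy).eq_or_lt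
  · obtain rfl := le_antisymm hxy hx0
    rfl
  have hratio : x / y ≤ 1 := (div_le_one hy0).2 hxy
  have hchord : f x ≤ (1 - x / y) * f 0 + x / y * f y := by
    simpa [hy0.ne'] using
      hf.2 h0 hy (sub_nonneg.2 hratio) (div_nonneg hx0 hy0.le) (sub_add_cancel 1 (x / y))
  have hle : f x ≤ x / y * f y :=
    hchord.trans (add_le_of_nonpos_left (mul_nonpos_of_nonneg_of_nonpos (sub_nonneg.2 hratio) hf0))
  calc y * f x ≤ y * (x / y * f y) := by gcongr
    _ = x * f y := by field_simp

section RealInequalities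

variable {x y a b R : ℝ}

theorem convexOn_sinh : ConvexOn ℝ (Set.Ici 0) Real.sinh := by
  refine MonotoneOn.convexOn_of_deriv (convex_Ici 0) Real.continuous_sinh.continuousOn
    Real.differentiable_sinh.differentiableOn ?_
  rw [Real.deriv_sinh]
  exact Real.cosh_strictMonoOn.monotoneOn.mono interior_subset

theorem mul_sinh_le_mul_sinh (hx : 0 ≤ x) (hxy : x ≤ y) :
    y * Real.sinh x ≤ x * Real.sinh y :=
  mul_map_le_mul_map_of_convexOn convexOn_sinh Set.self_mem_Ici Real.sinh_zero.le
    (hx.trans hxy) hx hxy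

theorem mul_sin_le_mul_sin (hx : 0 ≤ x) (hxy : x ≤ y) (hy : y ≤ Real.pi) :
    x * Real.sin y ≤ y * Real.sin x := by
  have h := mul_map_le_mul_map_of_convexOn strictConcaveOn_sin_Icc.concaveOn.neg
    ⟨le_rfl, Real.pi_pos.le⟩ (by simp) ⟨hx.trans hxy, hy⟩ hx hxy
  simpa using h

theorem antitoneOn_mul_sinh_sq_sub (R : ℝ) :
    AntitoneOn (fun x ↦ R * Real.sinh x ^ 2 - Real.sinh R * Real.cosh R * x ^ 2)
      (Set.Icc 0 R) := by
  have hderiv (x : ℝ) :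
      HasDerivAt (fun x ↦ R * Real.sinh x ^ 2 - Real.sinh R * Real.cosh R * x ^ 2)
        (R * Real.sinh (2 * x) - x * Real.sinh (2 * R)) x := by
    refine ((((Real.hasDerivAt_sinh x).pow 2).const_mul R).sub
      (((hasDerivAt_id x).pow 2).const_mul _)).congr_deriv ?_
    rw [Real.sinh_two_mul, Real.sinh_two_mul]
    simp only [id_eq]
    ring
  refine antitoneOn_of_hasDerivWithinAt_nonpos (convex_Icc 0 R)
    (fun x _ ↦ (hderiv x).continuousAt.continuousWithinAt)
    (fun x _ ↦ (hderiv x).hasDerivWithinAt) fun x hx ↦ ?_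
  obtain ⟨hx0, hxR⟩ := interior_subset hx
  have := mul_sinh_le_mul_sinh (x := 2 * x) (y := 2 * R) (by linarith) (by linarith)
  linarith

theorem mul_sinh_sq_sub_sinh_sq_le (ha : |a| ≤ R) :
    R * (Real.sinh R ^ 2 - Real.sinh a ^ 2) ≤ Real.sinh R * Real.cosh R * (R ^ 2 - a ^ 2) := by
  have hR : 0 ≤ R := (abs_nonneg a).trans ha
  have h := antitoneOn_mul_sinh_sq_sub R ⟨abs_nonneg a, ha⟩ ⟨hR, le_rfl⟩ ha
  simp only [← Real.abs_sinh, sq_abs] at h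
  linarith

theorem sq_sub_sq_mul_sin_sq_le (hR : 0 ≤ R) (hRpi : R ≤ Real.pi) (hb : |b| ≤ Real.pi / 2)
    (hab : R ^ 2 ≤ a ^ 2 + b ^ 2) :
    (R ^ 2 - a ^ 2) * Real.sin R ^ 2 ≤ R ^ 2 * Real.sin b ^ 2 := by
  set t := √(R ^ 2 - a ^ 2)
  obtain ⟨ht0, ht_sq⟩ : 0 ≤ t ∧ R ^ 2 - a ^ 2 ≤ t ^ 2 := Real.sqrt_le_iff.1 le_rfl
  have htR : t ≤ R := Real.sqrt_le_iff.2 ⟨hR, sub_le_self _ (sq_nonneg a)⟩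
  have htb : t ≤ |b| := Real.sqrt_le_iff.2 ⟨abs_nonneg b, by rw [sq_abs]; linarith⟩
  have hsin : t * Real.sin R ≤ R * Real.sin |b| :=
    (mul_sin_le_mul_sin ht0 htR hRpi).trans <| mul_le_mul_of_nonneg_left
      (Real.sin_le_sin_of_le_of_le_pi_div_two (by linarith [Real.pi_pos]) hb htb) hR
  have hsinR : 0 ≤ Real.sin R := Real.sin_nonneg_of_nonneg_of_le_pi hR hRpi
  calc (R ^ 2 - a ^ 2) * Real.sin R ^ 2 ≤ t ^ 2 * Real.sin R ^ 2 := by gcongr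
    _ = (t * Real.sin R) ^ 2 := (mul_pow _ _ _).symm
    _ ≤ (R * Real.sin |b|) ^ 2 := by gcongr
    _ = R ^ 2 * Real.sin b ^ 2 := by
      rw [← Real.abs_sin_eq_sin_abs_of_abs_le_pi (by linarith [Real.pi_pos]), mul_pow, sq_abs]

theorem sinh_one_mul_cosh_one_le :
    Real.sinh 1 * Real.cosh 1 ≤ Real.sin 1 ^ 2 * (Real.sinh 1 ^ 2 + Real.cosh 1) := by
  have hexp := Real.exp_one_gt_d9
  have hexp' := Real.exp_one_lt_d9
  have hexpn := Real.exp_neg_one_gt_d9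
  have hexpn' := Real.exp_neg_one_lt_d9
  have hcosh : 1.5 ≤ Real.cosh 1 := by rw [Real.cosh_eq]; linarith
  have hcosh' : Real.cosh 1 ≤ 1.55 := by rw [Real.cosh_eq]; linarith
  have hsinh : 1.17 ≤ Real.sinh 1 := by rw [Real.sinh_eq]; linarith
  have hsinh' : Real.sinh 1 ≤ 1.18 := by rw [Real.sinh_eq]; linarith
  have hsin : 56 / 81 ≤ Real.sin 1 ^ 2 := by
    nlinarith [Real.cos_one_le, Real.cos_one_pos, Real.sin_sq_add_cos_sq 1]
  calc Real.sinh 1 * Real.cosh 1 ≤ 1.18 * 1.55 := by gcongr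
    _ ≤ 56 / 81 * (1.17 ^ 2 + 1.5) := by norm_num
    _ ≤ Real.sin 1 ^ 2 * (Real.sinh 1 ^ 2 + Real.cosh 1) := by gcongr

theorem sinh_one_sq_sub_sinh_sq_le (hb : |b| ≤ Real.pi / 2) (hab : 1 ≤ a ^ 2 + b ^ 2) :
    Real.sinh 1 ^ 2 - Real.sinh a ^ 2 ≤
      Real.sin b ^ 2 * (Real.sinh 1 ^ 2 + Real.cosh 1) := by
  obtain ha | ha := le_total |a| 1
  · have hsinh := mul_sinh_sq_sub_sinh_sq_le ha
    have hsin := sq_sub_sq_mul_sin_sq_le zero_le_one (by linarith [Real.pi_gt_three]) hb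
      (by simpa only [one_pow] using hab)
    simp only [one_pow, one_mul] at hsinh hsin
    have ha' : 0 ≤ 1 - a ^ 2 := sub_nonneg.2 ((sq_le_one_iff_abs_le_one a).2 ha)
    calc Real.sinh 1 ^ 2 - Real.sinh a ^ 2 ≤ Real.sinh 1 * Real.cosh 1 * (1 - a ^ 2) := hsinh
      _ ≤ Real.sin 1 ^ 2 * (Real.sinh 1 ^ 2 + Real.cosh 1) * (1 - a ^ 2) :=
        mul_le_mul_of_nonneg_right sinh_one_mul_cosh_one_le ha'
      _ = (1 - a ^ 2) * Real.sin 1 ^ 2 * (Real.sinh 1 ^ 2 + Real.cosh 1) := by ring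
      _ ≤ Real.sin b ^ 2 * (Real.sinh 1 ^ 2 + Real.cosh 1) := by gcongr
  · have hsinh : Real.sinh 1 ^ 2 ≤ Real.sinh a ^ 2 := by
      rw [sq_le_sq, Real.abs_sinh, Real.abs_sinh, abs_one]
      exact Real.sinh_le_sinh.2 ha
    have : 0 ≤ Real.sin b ^ 2 * (Real.sinh 1 ^ 2 + Real.cosh 1) := by positivity
    linarith

theorem one_le_inv_cosh_one_sq_mul_cosh_sq_add (hb : |b| ≤ Real.pi / 2)
    (hab : 1 ≤ a ^ 2 + b ^ 2) :
    1 ≤ (Real.cosh 1)⁻¹ ^ 2 * Real.cosh a ^ 2 +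
      Real.sin b ^ 2 * (1 + (Real.cosh 1)⁻¹ - (Real.cosh 1)⁻¹ ^ 2) := by
  have h := sinh_one_sq_sub_sinh_sq_le hb hab
  rw [Real.sinh_sq, Real.sinh_sq] at h
  have hcosh := Real.cosh_pos 1
  field_simp
  linarith

theorem one_add_mul_exp_mul_add_le_sq {s N k : ℝ} (hk : k ≤ 1) (hs : 0 ≤ s)
    (hN : N ^ 2 = Real.cosh a ^ 2 - s)
    (h : 1 ≤ k ^ 2 * Real.cosh a ^ 2 + s * (1 + k - k ^ 2)) :
    (1 + k) * (Real.exp a * N + (Real.exp (2 * a) + (1 - 2 * s)) / 2) ≤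
      (Real.exp a + k * N) ^ 2 := by
  have hN_le : N ≤ Real.cosh a :=
    (abs_le_of_sq_le_sq' (by linarith) (Real.cosh_pos a).le).2
  have hexp : Real.exp (2 * a) = Real.exp a ^ 2 := by rw [← Real.exp_nat_mul]; norm_cast
  have hexp_sq : Real.exp a ^ 2 = 2 * Real.exp a * Real.cosh a - 1 := by
    rw [Real.cosh_eq, Real.exp_neg]
    field_simp
    ring
  have hgap : 0 ≤ (1 - k) * Real.exp a * (Real.cosh a - N) :=
    mul_nonneg (mul_nonneg (sub_nonneg.2 hk) (Real.exp_pos a).le) (sub_nonneg.2 hN_le)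
  have hsub : (Real.exp a + k * N) ^ 2 -
      (1 + k) * (Real.exp a * N + (Real.exp (2 * a) + (1 - 2 * s)) / 2) =
      (1 - k) * Real.exp a * (Real.cosh a - N) +
        (k ^ 2 * Real.cosh a ^ 2 + s * (1 + k - k ^ 2) - 1) := by
    rw [hexp]
    linear_combination k ^ 2 * hN + (1 - k) / 2 * hexp_sq
  linarith

end RealInequalities

section OneAddTanh

open ComplexConjugate

variable {z u : ℂ}

theorem conj_cosh_mul_exp (z : ℂ) :
    conj (cosh z) * exp z = (exp (2 * z.re) + exp (2 * z.im * I)) / 2 := by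
  rw [← cosh_conj, cosh, div_mul_eq_mul_div, add_mul, ← exp_add, ← exp_add,
    add_comm (conj z), add_conj, neg_add_eq_sub, sub_conj]
  push_cast
  ring

theorem cosh_eq_re_add_im (z : ℂ) :
    cosh z = (Real.cosh z.re * Real.cos z.im : ℝ) +
      (Real.sinh z.re * Real.sin z.im : ℝ) * I := by
  conv_lhs => rw [← re_add_im z, cosh_add, cosh_mul_I, sinh_mul_I]
  push_cast
  ring

theorem norm_cosh_sq (z : ℂ) :
    ‖cosh z‖ ^ 2 = Real.cosh z.re ^ 2 - Real.sin z.im ^ 2 := by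
  rw [Complex.sq_norm, cosh_eq_re_add_im, normSq_add_mul_I]
  linear_combination Real.cosh z.re ^ 2 * Real.sin_sq_add_cos_sq z.im -
    Real.sin z.im ^ 2 * Real.cosh_sq z.re

theorem one_add_tanh_mul_cosh (hz : cosh z ≠ 0) : (1 + tanh z) * cosh z = exp z := by
  rw [tanh_eq_sinh_div_cosh, add_mul, one_mul, div_mul_cancel₀ _ hz, cosh_add_sinh]

theorem norm_one_add_tanh_mul_norm_cosh (hz : cosh z ≠ 0) :
    ‖1 + tanh z‖ * ‖cosh z‖ = Real.exp z.re := by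
  rw [← norm_mul, one_add_tanh_mul_cosh hz, norm_exp]

theorem one_add_tanh_re_mul_norm_cosh_sq (hz : cosh z ≠ 0) :
    (1 + tanh z).re * ‖cosh z‖ ^ 2 = (Real.exp (2 * z.re) + Real.cos (2 * z.im)) / 2 := by
  have hmul : (1 + tanh z) * ((‖cosh z‖ ^ 2 : ℝ) : ℂ) =
      (exp (2 * z.re) + exp (2 * z.im * I)) / 2 := by
    rw [ofReal_pow, ← conj_mul', ← conj_cosh_mul_exp, ← one_add_tanh_mul_cosh hz]
    ring
  rw [← re_mul_ofReal, hmul]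
  simp [exp_re]

theorem mul_norm_add_re_one_add_tanh_le (hcosh : cosh z ≠ 0) (hz : 1 ≤ ‖z‖)
    (him : |z.im| ≤ Real.pi / 2) :
    (1 + (Real.cosh 1)⁻¹) * (‖1 + tanh z‖ + (1 + tanh z).re) ≤
      (‖1 + tanh z‖ + (Real.cosh 1)⁻¹) ^ 2 := by
  have hsq : 1 ≤ z.re ^ 2 + z.im ^ 2 := by
    rw [sq, sq, ← normSq_apply, ← Complex.sq_norm]
    exact one_le_pow₀ hz
  have hcos : Real.cos (2 * z.im) = 1 - 2 * Real.sin z.im ^ 2 := by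
    rw [Real.cos_two_mul, Real.cos_sq']
    ring
  have hmain := one_add_mul_exp_mul_add_le_sq (inv_le_one_of_one_le₀ (Real.one_le_cosh 1))
    (sq_nonneg _) (norm_cosh_sq z) (one_le_inv_cosh_one_sq_mul_cosh_sq_add him hsq)
  rw [← hcos, ← one_add_tanh_re_mul_norm_cosh_sq hcosh,
    ← norm_one_add_tanh_mul_norm_cosh hcosh] at hmain
  refine le_of_mul_le_mul_right ?_ (pow_pos (norm_pos_iff.2 hcosh) 2)
  linarith

theorem exists_one_add_tanh_eq (hu0 : u ≠ 0) (hu2 : u ≠ 2) :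
    ∃ z : ℂ, |z.im| ≤ Real.pi / 2 ∧ cosh z ≠ 0 ∧ 1 + tanh z = u := by
  have hsub : 2 - u ≠ 0 := sub_ne_zero.2 hu2.symm
  refine ⟨log (u / (2 - u)) / 2, ?_, ?_⟩
  · rw [div_ofNat_im, log_im, abs_div, Nat.abs_ofNat]
    gcongr
    exact abs_arg_le_pi _
  set z := log (u / (2 - u)) / 2 with hz
  have hexp : exp z ^ 2 = u / (2 - u) := by
    rw [← exp_nat_mul, Nat.cast_ofNat, hz, mul_div_cancel₀ _ two_ne_zero,
      exp_log (div_ne_zero hu0 hsub)]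
  have hmul : u * cosh z = exp z := by
    rw [eq_div_iff hsub] at hexp
    have := Complex.exp_ne_zero z
    rw [cosh, exp_neg]
    field_simp
    linear_combination -hexp
  have hcosh : cosh z ≠ 0 :=
    right_ne_zero_of_mul (hmul.trans_ne (Complex.exp_ne_zero z))
  exact ⟨hcosh, mul_right_cancel₀ hcosh ((one_add_tanh_mul_cosh hcosh).trans hmul.symm)⟩

theorem exists_mem_unitDisk_one_add_tanh_eq
    (hu : (‖u‖ + (Real.cosh 1)⁻¹) ^ 2 < (1 + (Real.cosh 1)⁻¹) * (‖u‖ + u.re)) :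
    ∃ z ∈ unitDisk, 1 + tanh z = u := by
  have hu0 : u ≠ 0 := by
    rintro rfl
    simp only [norm_zero, zero_re, add_zero, zero_add, mul_zero] at hu
    exact (sq_nonneg _).not_gt hu
  have hu2 : u ≠ 2 := by
    rintro rfl
    simp only [norm_ofNat, re_ofNat] at hu
    nlinarith [sq_nonneg (Real.cosh 1)⁻¹]
  obtain ⟨z, him, hcosh, rfl⟩ := exists_one_add_tanh_eq hu0 hu2
  refine ⟨z, ?_, rfl⟩
  rw [unitDisk, mem_ball_zero_iff]
  contrapose! hu
  exact mul_norm_add_re_one_add_tanh_le hcosh hu him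

end OneAddTanh

section Bean

variable {w z : ℂ} {m M : ℝ}

theorem bean_eq_of_one_add_tanh_eq_sq (hw : 0 < w.re) (h : 1 + tanh z = w ^ 2) :
    Bean z = w := by
  rw [Bean, h, one_div, sq_cpow_two_inv hw]

theorem exists_mem_unitDisk_bean_eq (hw : 0 < w.re)
    (h : (‖w‖ ^ 2 + (Real.cosh 1)⁻¹) ^ 2 < 2 * (1 + (Real.cosh 1)⁻¹) * w.re ^ 2) :
    ∃ z ∈ unitDisk, Bean z = w := by
  have hre : ‖w ^ 2‖ + (w ^ 2).re = 2 * w.re ^ 2 := by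
    rw [norm_pow, Complex.sq_norm, normSq_apply, sq w, mul_re]
    ring
  obtain ⟨z, hz, hzw⟩ := exists_mem_unitDisk_one_add_tanh_eq (u := w ^ 2) <| by
    rw [hre, norm_pow]
    linarith
  exact ⟨z, hz, bean_eq_of_one_add_tanh_eq_sq hw hzw⟩

theorem norm_sq_add_mul_lt_of_mem_ball
    (hw : w ∈ ball (((m + M) / 2 : ℝ) : ℂ) ((M - m) / 2)) :
    ‖w‖ ^ 2 + m * M < (m + M) * w.re := by
  have hsq : ‖w - ((m + M) / 2 : ℝ)‖ ^ 2 < ((M - m) / 2) ^ 2 := by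
    gcongr
    exact mem_ball_iff_norm.1 hw
  rw [Complex.sq_norm, normSq_apply, sub_re, sub_im, ofReal_re, ofReal_im] at hsq
  rw [Complex.sq_norm, normSq_apply]
  linarith

theorem ball_midpoint_subset_image_bean (hadd : 0 ≤ m + M)
    (hmul : m * M = (Real.cosh 1)⁻¹) (hsq : m ^ 2 + M ^ 2 = 2) :
    ball (((m + M) / 2 : ℝ) : ℂ) ((M - m) / 2) ⊆ Bean '' unitDisk := by
  intro w hw
  have hlt := norm_sq_add_mul_lt_of_mem_ball hw
  rw [hmul] at hlt
  have hpos : 0 < ‖w‖ ^ 2 + (Real.cosh 1)⁻¹ := by positivity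
  have hre : 0 < w.re := pos_of_mul_pos_right (hpos.trans hlt) hadd
  refine exists_mem_unitDisk_bean_eq hre ?_
  calc (‖w‖ ^ 2 + (Real.cosh 1)⁻¹) ^ 2 < ((m + M) * w.re) ^ 2 := by gcongr
    _ = 2 * (1 + (Real.cosh 1)⁻¹) * w.re ^ 2 := by
      linear_combination w.re ^ 2 * hsq + 2 * w.re ^ 2 * hmul

theorem ball_subset_ball_midpoint {α r : ℝ} (hm : r ≤ α - m) (hM : r ≤ M - α) :
    ball (α : ℂ) r ⊆ ball (((m + M) / 2 : ℝ) : ℂ) ((M - m) / 2) := by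
  refine ball_subset_ball' ?_
  rw [dist_eq, ← ofReal_sub, norm_real, Real.norm_eq_abs, ← le_sub_iff_add_le', abs_le]
  constructor <;> linarith

end Bean

theorem exp_mul_two_div_one_add_exp_sq (x : ℝ) :
    Real.exp x * (2 / (1 + Real.exp x ^ 2)) = (Real.cosh x)⁻¹ := by
  rw [Real.cosh_eq, Real.exp_neg]
  field_simp
  ring

theorem one_add_div_sqrt_two_mul (x : ℝ) :
    (1 + x) / √(2 * (1 + x ^ 2)) = (√(2 / (1 + x ^ 2)) + x * √(2 / (1 + x ^ 2))) / 2 := by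
  have hmul : √(2 / (1 + x ^ 2)) * √(2 * (1 + x ^ 2)) = 2 := by
    have hsq : 2 / (1 + x ^ 2) * (2 * (1 + x ^ 2)) = 2 ^ 2 := by field_simp
    rw [← Real.sqrt_mul (by positivity), hsq, Real.sqrt_sq zero_le_two]
  rw [div_eq_iff (by positivity)]
  linear_combination -(1 + x) / 2 * hmul

/-- the disk {|w − α| < r_α} is contained in 𝔅(𝔻). -/
theorem diskInBeanImage (α : ℝ)
    (hm : Real.sqrt (2 / (1 + Real.exp 1 ^ 2)) < α)
    (hM : α < Real.exp 1 * Real.sqrt (2 / (1 + Real.exp 1 ^ 2)))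
    (rα : ℝ)
    (hrα : rα = if α ≤ (1 + Real.exp 1) / Real.sqrt (2 * (1 + Real.exp 1 ^ 2))
        then α - Real.sqrt (2 / (1 + Real.exp 1 ^ 2))
        else Real.exp 1 * Real.sqrt (2 / (1 + Real.exp 1 ^ 2)) - α) :
    ∀ w : ℂ, ‖w - (α:ℂ)‖ < rα → ∃ z ∈ unitDisk, Bean z = w := by
  intro w hw
  rw [one_add_div_sqrt_two_mul] at hrα
  set m := √(2 / (1 + Real.exp 1 ^ 2))
  have hm_sq : m ^ 2 = 2 / (1 + Real.exp 1 ^ 2) := Real.sq_sqrt (by positivity)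
  have hmul : m * (Real.exp 1 * m) = (Real.cosh 1)⁻¹ := by
    rw [← exp_mul_two_div_one_add_exp_sq, ← hm_sq]
    ring
  have hsq : m ^ 2 + (Real.exp 1 * m) ^ 2 = 2 := by
    rw [mul_pow, hm_sq]
    field_simp
  have hr : rα ≤ α - m ∧ rα ≤ Real.exp 1 * m - α := by
    split_ifs at hrα <;> constructor <;> linarith
  exact ball_midpoint_subset_image_bean (by positivity) hmul hsq
    (ball_subset_ball_midpoint hr.1 hr.2 (mem_ball_iff_norm.2 hw))
end

section
/- If p is analytic on 𝔻 and p ≺ 𝔅, then Re p(z) > √(2/(1+e²)) for every z ∈ 𝔻. (In class language: 𝒮*_𝔅 ⊂ 𝒮*(α) ⊂ 𝒮* with α = √(2/(1+e²)), i.e. every f ∈ 𝒮*_𝔅 is starlike of order √(2/(1+e²)).) -/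
/-!
The minimum of `Re 𝔅` on a circle `|z| = r ≤ 1` is attained at `-r`, and `𝔅(-r) > 𝔅(-1)` for
`r < 1`. On the right half of the circle `Re tanh z ≥ 0`, hence `Re 𝔅(z) ≥ 1`. On the left half
put `z = -ζ` with `ζ = r e^{it}`; by conjugation symmetry, `0 ≤ t ≤ π/2` suffices. Since
`𝔅(z) = exp((z - log cosh z)/2)`, the derivative of `Re 𝔅(-r e^{it})` in `t` is half the imaginary
part of `ζ exp((ζ - 3 log cosh ζ)/2)`. With `y = Im ζ` and `α = arg cosh ζ`, the sign of the latter
is that of `sin(t + (y - 3α)/2)`, and `0 ≤ α ≤ y ≤ min(t, 1)` keeps the angle in `[0, π]`.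
-/

open Complex Metric

open Set
open scoped Real ComplexConjugate

lemma one_add_real_tanh (x : ℝ) : 1 + Real.tanh x = 2 / (1 + Real.exp (-x) ^ 2) := by
  rw [Real.tanh_eq, Real.exp_neg]
  field_simp
  ring

lemma real_tanh_strictMono : StrictMono Real.tanh := fun x y hxy ↦ by
  rw [← add_lt_add_iff_left 1, one_add_real_tanh, one_add_real_tanh]
  gcongr

lemma re_cosh (z : ℂ) : (cosh z).re = Real.cosh z.re * Real.cos z.im := by
  rw [← re_add_im z, cosh_add, cosh_mul_I, sinh_mul_I]
  simp [← ofReal_cosh, ← ofReal_sinh, ← ofReal_cos, ← ofReal_sin]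

lemma im_cosh (z : ℂ) : (cosh z).im = Real.sinh z.re * Real.sin z.im := by
  rw [← re_add_im z, cosh_add, cosh_mul_I, sinh_mul_I]
  simp [← ofReal_cosh, ← ofReal_sinh, ← ofReal_cos, ← ofReal_sin]

lemma re_sinh (z : ℂ) : (sinh z).re = Real.sinh z.re * Real.cos z.im := by
  rw [← re_add_im z, sinh_add, cosh_mul_I, sinh_mul_I]
  simp [← ofReal_cosh, ← ofReal_sinh, ← ofReal_cos, ← ofReal_sin]

lemma im_sinh (z : ℂ) : (sinh z).im = Real.cosh z.re * Real.sin z.im := by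
  rw [← re_add_im z, sinh_add, cosh_mul_I, sinh_mul_I]
  simp [← ofReal_cosh, ← ofReal_sinh, ← ofReal_cos, ← ofReal_sin]

lemma re_tanh (z : ℂ) :
    (tanh z).re = Real.sinh z.re * Real.cosh z.re / normSq (cosh z) := by
  rw [tanh_eq_sinh_div_cosh, div_re, re_sinh, im_sinh, re_cosh, im_cosh, ← add_div]
  congr 1
  linear_combination (Real.sinh z.re * Real.cosh z.re) * Real.sin_sq_add_cos_sq z.im

lemma re_tanh_nonneg {z : ℂ} (hz : 0 ≤ z.re) : 0 ≤ (tanh z).re := by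
  rw [re_tanh]
  exact div_nonneg (mul_nonneg (Real.sinh_nonneg_iff.mpr hz) (Real.cosh_pos _).le) (normSq_nonneg _)

lemma re_cosh_pos {z : ℂ} (hz : |z.im| < π / 2) : 0 < (cosh z).re := by
  rw [re_cosh]
  exact mul_pos (Real.cosh_pos _) (Real.cos_pos_of_mem_Ioo (abs_lt.mp hz))

lemma cosh_mem_slitPlane {z : ℂ} (hz : |z.im| < π / 2) : cosh z ∈ slitPlane :=
  Or.inl (re_cosh_pos hz)

lemma abs_arg_cosh_lt {z : ℂ} (hz : |z.im| < π / 2) : |arg (cosh z)| < π / 2 :=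
  abs_arg_lt_pi_div_two_iff.mpr (Or.inl (re_cosh_pos hz))

lemma arg_cosh_nonneg {z : ℂ} (hre : 0 ≤ z.re) (him : 0 ≤ z.im) (him' : z.im ≤ π) :
    0 ≤ arg (cosh z) := by
  rw [arg_nonneg_iff, im_cosh]
  exact mul_nonneg (Real.sinh_nonneg_iff.mpr hre) (Real.sin_nonneg_of_nonneg_of_le_pi him him')

lemma arg_cosh_le_im {z : ℂ} (him : 0 ≤ z.im) (him' : z.im < π / 2) : arg (cosh z) ≤ z.im := by
  have hz : |z.im| < π / 2 := by rwa [abs_of_nonneg him]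
  have hcos : 0 < Real.cos z.im := Real.cos_pos_of_mem_Ioo (abs_lt.mp hz)
  have hsin : 0 ≤ Real.sin z.im := Real.sin_nonneg_of_nonneg_of_le_pi him (by linarith)
  rw [← Real.strictMonoOn_tan.le_iff_le (abs_lt.mp (abs_arg_cosh_lt hz)) (abs_lt.mp hz), tan_arg,
    re_cosh, im_cosh, Real.tan_eq_sin_div_cos, mul_div_mul_comm]
  exact mul_le_of_le_one_left (by positivity)
    ((div_le_one (Real.cosh_pos _)).mpr (Real.sinh_lt_cosh _).le)

lemma re_bean (z : ℂ) : (Bean z).re = √((‖1 + tanh z‖ + (1 + tanh z).re) / 2) := by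
  rw [Bean, one_div, cpow_inv_two_re]

lemma re_bean_conj (z : ℂ) : (Bean (conj z)).re = (Bean z).re := by
  have hconj : 1 + tanh (conj z) = conj (1 + tanh z) := by simp [tanh_conj]
  rw [re_bean, re_bean, hconj, norm_conj, conj_re]

lemma re_bean_ofReal (x : ℝ) : (Bean x).re = √(1 + Real.tanh x) := by
  have hcast : 1 + tanh (x : ℂ) = ((1 + Real.tanh x : ℝ) : ℂ) := by simp
  have hpos : 0 ≤ 1 + Real.tanh x := by linarith [Real.neg_one_lt_tanh x]
  rw [re_bean, hcast, norm_real, Real.norm_of_nonneg hpos, ofReal_re, add_self_div_two]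

lemma one_le_re_bean {z : ℂ} (hz : 0 ≤ z.re) : 1 ≤ (Bean z).re := by
  have hre : 1 ≤ (1 + tanh z).re := by simpa using re_tanh_nonneg hz
  rw [re_bean, Real.one_le_sqrt]
  linarith [re_le_norm (1 + tanh z)]

lemma bean_eq_exp {z : ℂ} (hz : |z.im| < π / 2) : Bean z = exp ((z - log (cosh z)) / 2) := by
  have hcosh : cosh z ≠ 0 := slitPlane_ne_zero (cosh_mem_slitPlane hz)
  have hexp : 1 + tanh z = exp (z - log (cosh z)) := by
    rw [exp_sub, exp_log hcosh, tanh_eq_sinh_div_cosh, one_add_div hcosh, cosh_add_sinh]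
  have him : |(z - log (cosh z)).im| < π := by
    rw [sub_im, log_im]
    linarith [abs_sub z.im (arg (cosh z)), abs_arg_cosh_lt hz]
  rw [Bean, hexp, cpow_def_of_ne_zero (exp_ne_zero _),
    log_exp (abs_lt.mp him).1 (abs_lt.mp him).2.le, mul_one_div]

lemma hasDerivAt_bean {z : ℂ} (hz : |z.im| < π / 2) :
    HasDerivAt Bean (exp (-(z + 3 * log (cosh z)) / 2) / 2) z := by
  have hcosh : cosh z ≠ 0 := slitPlane_ne_zero (cosh_mem_slitPlane hz)
  have hstrip : {w : ℂ | |w.im| < π / 2} ∈ nhds z :=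
    (isOpen_lt continuous_im.abs continuous_const).mem_nhds hz
  have hone_sub_tanh : 1 - sinh z / cosh z = exp (-z - log (cosh z)) := by
    rw [exp_sub, exp_log hcosh, one_sub_div hcosh, cosh_sub_sinh]
  have hderiv := (((hasDerivAt_id z).sub
    ((hasDerivAt_cosh z).clog (cosh_mem_slitPlane hz))).div_const 2).cexp
  refine (hderiv.congr_deriv ?_).congr_of_eventuallyEq
    (Filter.mem_of_superset hstrip fun w hw ↦ bean_eq_exp hw)
  simp only [id_eq, Pi.sub_apply]
  rw [hone_sub_tanh, mul_div_assoc', ← exp_add]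
  ring_nf

lemma hasDerivAt_re_bean_neg_circleMap {r t : ℝ} (hrt : |(circleMap 0 r t).im| < π / 2) :
    HasDerivAt (fun s ↦ (Bean (-circleMap 0 r s)).re)
      ((circleMap 0 r t * exp ((circleMap 0 r t - 3 * log (cosh (circleMap 0 r t))) / 2)).im / 2)
      t := by
  have hbean := (hasDerivAt_bean (z := -circleMap 0 r t) (by rwa [neg_im, abs_neg])).comp t
    (hasDerivAt_circleMap 0 r t).neg
  refine (reCLM.hasFDerivAt.comp_hasDerivAt t hbean).congr_deriv ?_
  rw [cosh_neg, neg_add_eq_sub]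
  simp only [neg_sub, mul_neg, reCLM_apply, neg_re, mul_re, mul_im, div_ofNat_re, div_ofNat_im,
    I_re, I_im]
  ring

lemma im_circleMap_mul_exp_nonneg {r t : ℝ} (hr : 0 ≤ r) (hr1 : r ≤ 1) (ht : t ∈ Icc 0 (π / 2)) :
    0 ≤ (circleMap 0 r t *
      exp ((circleMap 0 r t - 3 * log (cosh (circleMap 0 r t))) / 2)).im := by
  obtain ⟨ht0, htπ⟩ := ht
  have hζ : circleMap 0 r t = r * exp (t * I) := circleMap_zero r t
  have hre : (circleMap 0 r t).re = r * Real.cos t := by simp [hζ, exp_ofReal_mul_I_re]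
  have him : (circleMap 0 r t).im = r * Real.sin t := by simp [hζ, exp_ofReal_mul_I_im]
  set ζ := circleMap 0 r t
  have hsin : 0 ≤ Real.sin t := Real.sin_nonneg_of_nonneg_of_le_pi ht0 (by linarith)
  have hcos : 0 ≤ Real.cos t := Real.cos_nonneg_of_mem_Icc ⟨by linarith, htπ⟩
  have hy0 : 0 ≤ ζ.im := by rw [him]; positivity
  have hy_sin : ζ.im ≤ Real.sin t := by rw [him]; exact mul_le_of_le_one_left hsin hr1
  have hyt : ζ.im ≤ t := hy_sin.trans (Real.sin_le ht0)
  have hy1 : ζ.im ≤ 1 := hy_sin.trans (Real.sin_le_one t)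
  have hπ := Real.pi_gt_three
  have hα0 : 0 ≤ arg (cosh ζ) := arg_cosh_nonneg (by rw [hre]; positivity) hy0 (by linarith)
  have hαy : arg (cosh ζ) ≤ ζ.im := arg_cosh_le_im hy0 (by linarith)
  have hangle : (t * I + (ζ - 3 * log (cosh ζ)) / 2).im = t + (ζ.im - 3 * arg (cosh ζ)) / 2 := by
    simp [log_im]
  have hpolar : ζ * exp ((ζ - 3 * log (cosh ζ)) / 2) =
      r * exp (t * I + (ζ - 3 * log (cosh ζ)) / 2) := by
    rw [exp_add, ← mul_assoc, ← hζ]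
  rw [hpolar, im_ofReal_mul, exp_im, hangle]
  have hsin_angle : 0 ≤ Real.sin (t + (ζ.im - 3 * arg (cosh ζ)) / 2) :=
    Real.sin_nonneg_of_nonneg_of_le_pi (by linarith) (by linarith)
  positivity

lemma monotoneOn_re_bean_neg_circleMap {r : ℝ} (hr : 0 ≤ r) (hr1 : r ≤ 1) :
    MonotoneOn (fun t ↦ (Bean (-circleMap 0 r t)).re) (Icc 0 (π / 2)) := by
  have hstrip (t : ℝ) : |(circleMap 0 r t).im| < π / 2 := by
    have him : |(circleMap 0 r t).im| ≤ r := by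
      simpa only [norm_circleMap_zero, abs_of_nonneg hr] using abs_im_le_norm (circleMap 0 r t)
    linarith [Real.pi_gt_three]
  have hderiv (t : ℝ) := hasDerivAt_re_bean_neg_circleMap (hstrip t)
  refine monotoneOn_of_hasDerivWithinAt_nonneg (convex_Icc _ _)
    (fun t _ ↦ (hderiv t).continuousAt.continuousWithinAt)
    (fun t _ ↦ (hderiv t).hasDerivWithinAt) fun t ht ↦ ?_
  exact div_nonneg (im_circleMap_mul_exp_nonneg hr hr1 (interior_subset ht)) zero_le_two

lemma re_bean_neg_norm_le_of_re_nonpos_of_im_nonpos {z : ℂ} (hz : ‖z‖ ≤ 1) (hre : z.re ≤ 0)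
    (him : z.im ≤ 0) : (Bean (-‖z‖)).re ≤ (Bean z).re := by
  have hpolar : circleMap 0 ‖z‖ (arg (-z)) = -z := by
    rw [circleMap_zero, ← norm_neg, norm_mul_exp_arg_mul_I]
  have harg0 : 0 ≤ arg (-z) := arg_nonneg_iff.mpr (neg_nonneg.mpr him)
  have harg : arg (-z) ≤ π / 2 := arg_le_pi_div_two_iff.mpr (Or.inl (neg_nonneg.mpr hre))
  have hmono := monotoneOn_re_bean_neg_circleMap (norm_nonneg z) hz
    (left_mem_Icc.mpr Real.pi_div_two_pos.le) ⟨harg0, harg⟩ harg0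
  have hstart : circleMap 0 ‖z‖ 0 = ‖z‖ := by simp [circleMap_zero]
  simpa only [hstart, hpolar, neg_neg] using hmono

lemma re_bean_neg_norm_le {z : ℂ} (hz : ‖z‖ ≤ 1) : (Bean (-‖z‖)).re ≤ (Bean z).re := by
  rcases le_total 0 z.re with hre | hre
  · refine le_trans ?_ (one_le_re_bean hre)
    have htanh : Real.tanh (-‖z‖) ≤ 0 := by
      simpa using real_tanh_strictMono.monotone (neg_nonpos.mpr (norm_nonneg z))
    rw [← ofReal_neg, re_bean_ofReal]
    exact Real.sqrt_le_one.mpr (by linarith)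
  rcases le_total z.im 0 with him | him
  · exact re_bean_neg_norm_le_of_re_nonpos_of_im_nonpos hz hre him
  · rw [← re_bean_conj z, ← norm_conj]
    exact re_bean_neg_norm_le_of_re_nonpos_of_im_nonpos (by rwa [norm_conj]) hre
      (by simpa using him)

lemma sqrt_lt_re_bean {z : ℂ} (hz : ‖z‖ < 1) : √(2 / (1 + Real.exp 1 ^ 2)) < (Bean z).re :=
  calc √(2 / (1 + Real.exp 1 ^ 2)) = √(1 + Real.tanh (-1)) := by rw [one_add_real_tanh, neg_neg]
    _ < √(1 + Real.tanh (-‖z‖)) :=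
      Real.sqrt_lt_sqrt (by linarith [Real.neg_one_lt_tanh (-1)])
        (add_lt_add_right (real_tanh_strictMono (neg_lt_neg hz)) 1)
    _ = (Bean (-‖z‖)).re := by rw [← ofReal_neg, re_bean_ofReal]
    _ ≤ (Bean z).re := re_bean_neg_norm_le hz.le

/-- p ≺ 𝔅 implies Re p(z) > √(2/(1+e²)) on 𝔻. -/
theorem beanSubsetStarlikeOrder (p : ℂ → ℂ) (hp : AnalyticOnNhd ℂ p unitDisk)
    (hsub : Subord p Bean) :
    ∀ z ∈ unitDisk, Real.sqrt (2 / (1 + Real.exp 1 ^ 2)) < (p z).re := by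
  obtain ⟨ω, -, -, hω, hpω⟩ := hsub
  intro z hz
  rw [hpω z hz]
  exact sqrt_lt_re_bean (hω z hz)
end

section
/- Let α be a real number with 0 ≤ α < 1 − e/√(2(1+e²)), and set r_L(α) = 1 − ( (√(2/(1+e²)) − α)/(1−α) )². If p is analytic on 𝔻 and p ≺ α + (1−α)·(1+z)^{1/2} (principal square root), then for every z ∈ 𝔻 with |z| < r_L(α) one has p(z) ∈ 𝔅(𝔻), i.e. there exists u ∈ 𝔻 with p(z) = 𝔅(u). (This is the 𝒮*_𝔅-radius statement for the class 𝒮*_L(α).) -/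
open Complex Metric

/-!
Write `q = α + (1 - α)√(1 + w)` for a value of the dominant function. As `√(1 + tanh u) = q` amounts
to `tanh u = q² - 1` when `0 < Re q`, and the Taylor coefficients of `artanh` are nonnegative,
the image of the bean function contains every `q` in the right half-plane with
`‖q² - 1‖ < tanh 1`. For fixed `‖w‖` the quantity `‖q² - 1‖` is largest at `w = -‖w‖`, where it
is `1 - (α + (1 - α)√(1 - ‖w‖))²`. The radius is the value of `‖w‖` at which this reaches `tanh 1`,
and for a subordinating function `ω` Schwarz's lemma gives `‖ω z‖ ≤ ‖z‖`.
-/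

theorem Subord.exists_norm_le {p g : ℂ → ℂ} (h : Subord p g) {z : ℂ} (hz : z ∈ unitDisk) :
    ∃ w, ‖w‖ ≤ ‖z‖ ∧ p z = g w := by
  obtain ⟨ω, hω, hω0, hω1, hp⟩ := h
  have hmaps : Set.MapsTo ω (ball 0 1) (closedBall 0 1) := fun x hx ↦
    mem_closedBall_zero_iff.2 (hω1 x hx).le
  exact ⟨ω z, norm_le_norm_of_mapsTo_ball hω.differentiableOn hmaps hω0
    (mem_ball_zero_iff.1 hz), hp z hz⟩

theorem hasSum_artanh {x : ℝ} (hx : |x| < 1) :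
    HasSum (fun n : ℕ ↦ x ^ (2 * n + 1) / ↑(2 * n + 1)) (Real.artanh x) := by
  obtain ⟨hx₁, hx₂⟩ := abs_lt.1 hx
  rw [Real.artanh_eq_half_log ⟨hx₁.le, hx₂.le⟩, Real.log_div (by linarith) (by linarith)]
  refine ((Real.hasSum_log_sub_log_of_abs_lt_one hx).mul_left (1 / 2)).congr_fun fun n ↦ ?_
  push_cast
  ring

theorem norm_arctan_le_artanh_norm {z : ℂ} (hz : ‖z‖ < 1) : ‖arctan z‖ ≤ Real.artanh ‖z‖ := by
  rw [← (hasSum_arctan hz).tsum_eq]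
  refine tsum_of_norm_bounded (hasSum_artanh (by rwa [abs_norm])) fun n ↦ ?_
  simp [-Nat.cast_add]

theorem norm_arctan_lt_of_norm_lt_tanh {z : ℂ} {r : ℝ} (hz : ‖z‖ < Real.tanh r) :
    ‖arctan z‖ < r := by
  calc ‖arctan z‖ ≤ Real.artanh ‖z‖ := norm_arctan_le_artanh_norm (hz.trans (Real.tanh_lt_one r))
    _ < Real.artanh (Real.tanh r) :=
      Real.artanh_lt_artanh (by linarith [norm_nonneg z]) (Real.tanh_lt_one r) hz
    _ = r := Real.artanh_tanh r

theorem ball_tanh_subset_image_tanh (r : ℝ) : ball 0 (Real.tanh r) ⊆ tanh '' ball 0 r := by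
  intro w hw
  have hw : ‖-w * I‖ < Real.tanh r := by simpa using hw
  have ne_of_norm_eq_one {v : ℂ} (hv : ‖v‖ = 1) : -w * I ≠ v := fun h ↦
    (hw.trans (Real.tanh_lt_one r)).ne (h ▸ hv)
  refine ⟨arctan (-w * I) * I, ?_, ?_⟩
  · simpa using norm_arctan_lt_of_norm_lt_tanh hw
  · rw [tanh_mul_I, tan_arctan (ne_of_norm_eq_one (by simp)) (ne_of_norm_eq_one (by simp)),
      mul_assoc, I_mul_I, neg_mul_neg, mul_one]

theorem mem_image_bean_of_norm_sq_sub_one_lt {q : ℂ} (hq : 0 < q.re)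
    (h : ‖q ^ 2 - 1‖ < Real.tanh 1) : q ∈ Bean '' unitDisk := by
  obtain ⟨u, hu, htanh⟩ := ball_tanh_subset_image_tanh 1 (mem_ball_zero_iff.2 h)
  refine ⟨u, hu, ?_⟩
  rw [Bean, htanh, add_sub_cancel, one_div, sq_cpow_two_inv hq]

theorem sqrt_one_sub_norm_le_re_cpow (w : ℂ) :
    √(1 - ‖w‖) ≤ ((1 + w) ^ (2⁻¹ : ℂ)).re := by
  rw [cpow_inv_two_re]
  have hnorm : 1 - ‖w‖ ≤ ‖1 + w‖ := by simpa using norm_sub_norm_le 1 (-w)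
  have hre : 1 - ‖w‖ ≤ (1 + w).re := by
    rw [add_re, one_re]
    linarith [neg_abs_le w.re, abs_re_le_norm w]
  exact Real.sqrt_le_sqrt (by linarith)

theorem norm_cpow_sub_one_le {w : ℂ} (hw : ‖w‖ ≤ 1) :
    ‖(1 + w) ^ (2⁻¹ : ℂ) - 1‖ ≤ 1 - √(1 - ‖w‖) := by
  set s := (1 + w) ^ (2⁻¹ : ℂ)
  set k := √(1 - ‖w‖)
  have hk : k ^ 2 = 1 - ‖w‖ := Real.sq_sqrt (by linarith)
  have hs : s ^ 2 = 1 + w := cpow_ofNat_inv_pow (1 + w) 2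
  have hks : k + 1 ≤ ‖s + 1‖ := by
    calc k + 1 ≤ (s + 1).re := by simpa using sqrt_one_sub_norm_le_re_cpow w
      _ ≤ ‖s + 1‖ := re_le_norm _
  refine le_of_mul_le_mul_right ?_ (by positivity : 0 < k + 1)
  calc ‖s - 1‖ * (k + 1) ≤ ‖s - 1‖ * ‖s + 1‖ := by gcongr
    _ = ‖w‖ := by rw [← norm_mul]; congr 1; linear_combination hs
    _ = (1 - k) * (k + 1) := by linear_combination hk

theorem norm_add_mul_sq_sub_one_le {α k : ℝ} {s : ℂ} (hα0 : 0 ≤ α) (hα1 : α ≤ 1)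
    (hs : ‖s - 1‖ ≤ 1 - k) (hs2 : ‖s ^ 2 - 1‖ ≤ 1 - k ^ 2) :
    ‖(α + (1 - α) * s) ^ 2 - 1‖ ≤ 1 - (α + (1 - α) * k) ^ 2 := by
  have hαβ : 0 ≤ 2 * α * (1 - α) := mul_nonneg (by positivity) (sub_nonneg.2 hα1)
  calc ‖(α + (1 - α) * s) ^ 2 - 1‖
      = ‖((1 - α) ^ 2 : ℝ) * (s ^ 2 - 1) + (2 * α * (1 - α) : ℝ) * (s - 1)‖ := by
        push_cast; ring_nf
    _ ≤ (1 - α) ^ 2 * ‖s ^ 2 - 1‖ + 2 * α * (1 - α) * ‖s - 1‖ := by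
        refine (norm_add_le _ _).trans_eq ?_
        rw [norm_mul, norm_mul, Complex.norm_of_nonneg (sq_nonneg _),
          Complex.norm_of_nonneg hαβ]
    _ ≤ (1 - α) ^ 2 * (1 - k ^ 2) + 2 * α * (1 - α) * (1 - k) := by gcongr
    _ = 1 - (α + (1 - α) * k) ^ 2 := by ring

theorem norm_add_mul_cpow_sq_sub_one_le {α : ℝ} {w : ℂ} (hα0 : 0 ≤ α) (hα1 : α ≤ 1)
    (hw : ‖w‖ ≤ 1) :
    ‖(α + (1 - α) * (1 + w) ^ (2⁻¹ : ℂ)) ^ 2 - 1‖ ≤ 1 - (α + (1 - α) * √(1 - ‖w‖)) ^ 2 := by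
  refine norm_add_mul_sq_sub_one_le hα0 hα1 (norm_cpow_sub_one_le hw) ?_
  rw [cpow_ofNat_inv_pow, Real.sq_sqrt (sub_nonneg.2 hw), add_sub_cancel_left, sub_sub_cancel]

theorem one_sub_tanh (x : ℝ) : 1 - Real.tanh x = 2 / (1 + Real.exp x ^ 2) := by
  rw [Real.tanh_eq, Real.exp_neg]
  field_simp
  ring

theorem add_mul_cpow_mem_image_bean {α : ℝ} {w : ℂ} (hα0 : 0 ≤ α) (hα1 : α < 1)
    (hw : ‖w‖ < 1 - ((√(1 - Real.tanh 1) - α) / (1 - α)) ^ 2) :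
    α + (1 - α) * (1 + w) ^ (2⁻¹ : ℂ) ∈ Bean '' unitDisk := by
  set m := √(1 - Real.tanh 1)
  have hm : 0 < 1 - Real.tanh 1 := sub_pos.2 (Real.tanh_lt_one 1)
  have hw1 : ‖w‖ ≤ 1 := by linarith [sq_nonneg ((m - α) / (1 - α))]
  have hβ : 0 < 1 - α := sub_pos.2 hα1
  have hmk : m < α + (1 - α) * √(1 - ‖w‖) := by
    have := (div_lt_iff₀' hβ).1 (Real.lt_sqrt_of_sq_lt (lt_sub_comm.1 hw))
    linarith
  apply mem_image_bean_of_norm_sq_sub_one_lt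
  · calc 0 < m := Real.sqrt_pos.2 hm
      _ < α + (1 - α) * √(1 - ‖w‖) := hmk
      _ ≤ α + (1 - α) * ((1 + w) ^ (2⁻¹ : ℂ)).re := by
        gcongr
        exact sqrt_one_sub_norm_le_re_cpow w
      _ = (α + (1 - α) * (1 + w) ^ (2⁻¹ : ℂ)).re := by simp
  · calc ‖(α + (1 - α) * (1 + w) ^ (2⁻¹ : ℂ)) ^ 2 - 1‖
        ≤ 1 - (α + (1 - α) * √(1 - ‖w‖)) ^ 2 := norm_add_mul_cpow_sq_sub_one_le hα0 hα1.le hw1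
      _ < 1 - m ^ 2 := by gcongr
      _ = Real.tanh 1 := by rw [Real.sq_sqrt hm.le, sub_sub_cancel]

theorem beanRadiusSqrtShifted_general {α : ℝ} (hα0 : 0 ≤ α) (hα1 : α < 1) {p : ℂ → ℂ}
    (hsub : Subord p (fun z ↦ α + (1 - α) * (1 + z) ^ ((1 : ℂ) / 2))) {z : ℂ}
    (hz : ‖z‖ < 1 - ((√(2 / (1 + Real.exp 1 ^ 2)) - α) / (1 - α)) ^ 2) :
    ∃ u ∈ unitDisk, p z = Bean u := by
  have hz1 : z ∈ unitDisk := mem_ball_zero_iff.2 (hz.trans_le (sub_le_self _ (sq_nonneg _)))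
  obtain ⟨w, hwz, hpz⟩ := hsub.exists_norm_le hz1
  rw [← one_sub_tanh] at hz
  obtain ⟨u, hu, hBean⟩ := add_mul_cpow_mem_image_bean hα0 hα1 (hwz.trans_lt hz)
  exact ⟨u, hu, by rw [hpz, one_div, hBean]⟩

/-- 𝒮*_𝔅-radius for the class 𝒮*_L(α). -/
theorem beanRadiusSqrtShifted (α : ℝ) (hα0 : 0 ≤ α)
    (hα1 : α < 1 - Real.exp 1 / Real.sqrt (2 * (1 + Real.exp 1 ^ 2))) (rL : ℝ)
    (hrL : rL = 1 - ((Real.sqrt (2 / (1 + Real.exp 1 ^ 2)) - α) / (1 - α)) ^ 2)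
    (p : ℂ → ℂ) (hp : AnalyticOnNhd ℂ p unitDisk)
    (hsub : Subord p (fun z => (α:ℂ) + (1 - (α:ℂ)) * (1 + z) ^ ((1:ℂ)/2))) :
    ∀ z ∈ unitDisk, ‖z‖ < rL → ∃ u ∈ unitDisk, p z = Bean u := by
  intro z _ hz
  have hα : α < 1 := hα1.trans_le (sub_le_self _ (by positivity))
  exact beanRadiusSqrtShifted_general hα0 hα hsub (hrL ▸ hz)
end

section
/- Let α be a real number with √(2/(1+e²)) < α < 1. If p is analytic on 𝔻 and p ≺ 𝔅, then for every z ∈ 𝔻 with |z| < (1/2)·log((2−α²)/α²) one has Re p(z) > α. (In class language: every f ∈ 𝒮*_𝔅 is starlike of order α in the disk |z| < (1/2)·log((2−α²)/α²).) -/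
open Complex Metric

theorem exp_le_quartic {x : ℝ} (hx : x ≤ 2) :
    Real.exp x ≤ 3 / 2 + 5 / 4 * x ^ 2 + 5 / 32 * x ^ 4 := by
  rcases le_total x 0 with hx0 | hx0
  · calc Real.exp x ≤ 1 := Real.exp_le_one_iff.2 hx0
      _ ≤ 3 / 2 := by norm_num
      _ ≤ 3 / 2 + 5 / 4 * x ^ 2 + 5 / 32 * x ^ 4 := by
        rw [add_assoc]
        exact le_add_of_nonneg_right (by positivity)
  obtain ⟨u, rfl⟩ : ∃ u, x = u + u := ⟨x / 2, (add_halves x).symm⟩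
  have hu0 : 0 ≤ u := by linarith
  have hu : Real.exp u ≤ 1 + u + 3 / 4 * u ^ 2 := by
    convert Real.exp_bound' hu0 (by linarith) (n := 2) two_pos using 1
    norm_num [Finset.sum_range_succ]
    ring
  calc Real.exp (u + u) = Real.exp u * Real.exp u := Real.exp_add u u
    _ ≤ (1 + u + 3 / 4 * u ^ 2) * (1 + u + 3 / 4 * u ^ 2) := by gcongr
    _ ≤ 3 / 2 + 5 / 4 * (u + u) ^ 2 + 5 / 32 * (u + u) ^ 4 := by
      nlinarith [sq_nonneg (5 * u ^ 2 - 2 * u), sq_nonneg (2 * u - 1)]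

theorem sq_div_sub_one_le_cos {y : ℝ} (hy : y ^ 2 ≤ 8) :
    (8 - y ^ 2) ^ 2 / 32 - 1 ≤ Real.cos y := by
  have hhalf : (8 - y ^ 2) / 8 ≤ Real.cos (y / 2) := by
    linarith [Real.one_sub_sq_div_two_le_cos (x := y / 2)]
  calc (8 - y ^ 2) ^ 2 / 32 - 1 = 2 * ((8 - y ^ 2) / 8) ^ 2 - 1 := by ring
    _ ≤ 2 * Real.cos (y / 2) ^ 2 - 1 := by gcongr
    _ = Real.cos y := by rw [← Real.cos_two_mul, mul_div_cancel₀ _ two_ne_zero]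

theorem exp_le_four_add_five_mul_cos {x y : ℝ} (h : x ^ 2 + y ^ 2 ≤ 4) :
    Real.exp x ≤ 4 + 5 * Real.cos y :=
  calc Real.exp x ≤ 3 / 2 + 5 / 4 * x ^ 2 + 5 / 32 * x ^ 4 := exp_le_quartic (by nlinarith)
    _ = 4 + 5 * ((4 + x ^ 2) ^ 2 / 32 - 1) := by ring
    _ ≤ 4 + 5 * ((8 - y ^ 2) ^ 2 / 32 - 1) := by gcongr; linarith
    _ ≤ 4 + 5 * Real.cos y := by gcongr; exact sq_div_sub_one_le_cos (by nlinarith)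

theorem exp_add_exp_mul_sin_sq_le_exp_norm {ζ : ℂ} (hζ : ‖ζ‖ ≤ 2) :
    Real.exp ζ.re + Real.exp ζ.re * Real.sin (ζ.im / 2) ^ 2 ≤ Real.exp ‖ζ‖ := by
  have hnorm : ζ.re + (ζ.im / 2) ^ 2 ≤ ‖ζ‖ := by
    nlinarith [re_le_norm ζ, Complex.sq_norm ζ, normSq_apply ζ]
  calc Real.exp ζ.re + Real.exp ζ.re * Real.sin (ζ.im / 2) ^ 2
      = Real.exp ζ.re * (Real.sin (ζ.im / 2) ^ 2 + 1) := by ring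
    _ ≤ Real.exp ζ.re * ((ζ.im / 2) ^ 2 + 1) := by gcongr ?_ * (?_ + 1); exact Real.sin_sq_le_sq
    _ ≤ Real.exp ζ.re * Real.exp ((ζ.im / 2) ^ 2) := by gcongr; exact Real.add_one_le_exp _
    _ = Real.exp (ζ.re + (ζ.im / 2) ^ 2) := (Real.exp_add _ _).symm
    _ ≤ Real.exp ‖ζ‖ := Real.exp_le_exp.2 hnorm

theorem mul_cubic_le_three_mul_sq {E q : ℝ} (hq : 0 ≤ q) (hqE : 10 * q ≤ E * (9 - E)) :
    q * (E ^ 2 + 15 + q * (E - 6) + q ^ 2) ≤ 3 * (1 + E) ^ 2 := by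
  have hE : 0 ≤ E := by nlinarith
  obtain ⟨r, hr⟩ : ∃ r, r = E * (9 - E) / 10 := ⟨_, rfl⟩
  have hqr : q ≤ r := by linarith
  have hslope : 0 ≤ E ^ 2 + 15 + (q + r) * (E - 6) + (q ^ 2 + q * r + r ^ 2) := by
    nlinarith [mul_nonneg (add_nonneg hq (hq.trans hqr)) hE, sq_nonneg (q + r - 4),
      sq_nonneg (q - r)]
  calc q * (E ^ 2 + 15 + q * (E - 6) + q ^ 2)
      ≤ r * (E ^ 2 + 15 + r * (E - 6) + r ^ 2) := by
        linarith [mul_nonneg (sub_nonneg.2 hqr) hslope]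
    _ ≤ 3 * (1 + E) ^ 2 := by
        subst hr
        nlinarith [sq_nonneg (E ^ 3 - 9 * E ^ 2 + 20 * E - 20), sq_nonneg (E ^ 2 - E),
          sq_nonneg (E - 1)]

theorem two_mul_sq_le_of_sq_eq {E q m : ℝ} (hq : 0 ≤ q) (hqE : 10 * q ≤ E * (9 - E))
    (hm : 0 ≤ m) (hmE : m ^ 2 = (1 + E) ^ 2 - 4 * q) :
    2 * m ^ 2 ≤ (1 + E + q) * (m + (1 + E - 2 * q)) := by
  have hE : 0 ≤ E := by nlinarith
  have hdiff : ((1 + E + q) * m) ^ 2 - (2 * m ^ 2 - (1 + E + q) * (1 + E - 2 * q)) ^ 2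
      = 4 * q * (3 * (1 + E) ^ 2 - q * (E ^ 2 + 15 + q * (E - 6) + q ^ 2)) := by
    rw [mul_pow, hmE]; ring
  have hsq : (2 * m ^ 2 - (1 + E + q) * (1 + E - 2 * q)) ^ 2 ≤ ((1 + E + q) * m) ^ 2 := by
    rw [← sub_nonneg, hdiff]
    exact mul_nonneg (by positivity) (sub_nonneg.2 (mul_cubic_le_three_mul_sq hq hqE))
  linarith [le_of_abs_le (abs_le_of_sq_le_sq hsq (by positivity))]

theorem one_add_exp_re (ζ : ℂ) :
    (1 + exp ζ).re = 1 + Real.exp ζ.re - 2 * (Real.exp ζ.re * Real.sin (ζ.im / 2) ^ 2) := by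
  rw [add_re, one_re, exp_re, Real.sin_sq_eq_half_sub, mul_div_cancel₀ _ two_ne_zero]
  ring

theorem norm_one_add_exp_sq (ζ : ℂ) :
    ‖1 + exp ζ‖ ^ 2
      = (1 + Real.exp ζ.re) ^ 2 - 4 * (Real.exp ζ.re * Real.sin (ζ.im / 2) ^ 2) := by
  rw [Complex.sq_norm, normSq_apply, add_re, add_im, one_re, one_im, exp_re, exp_im,
    Real.sin_sq_eq_half_sub, mul_div_cancel₀ _ two_ne_zero]
  linear_combination Real.exp ζ.re ^ 2 * Real.sin_sq_add_cos_sq ζ.im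

section NormLeTwo

variable {ζ : ℂ} (hζ : ‖ζ‖ ≤ 2)
include hζ

theorem exp_re_le_four_add_five_mul_cos_im : Real.exp ζ.re ≤ 4 + 5 * Real.cos ζ.im :=
  exp_le_four_add_five_mul_cos (by nlinarith [Complex.sq_norm ζ, normSq_apply ζ, norm_nonneg ζ])

theorem one_add_exp_re_pos : 0 < (1 + exp ζ).re := by
  rw [add_re, one_re, exp_re]
  nlinarith [exp_re_le_four_add_five_mul_cos_im hζ, Real.exp_pos ζ.re,
    sq_nonneg (Real.exp ζ.re - 2)]

theorem two_mul_norm_one_add_exp_sq_le :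
    2 * ‖1 + exp ζ‖ ^ 2 ≤ (1 + Real.exp ‖ζ‖) * (‖1 + exp ζ‖ + (1 + exp ζ).re) := by
  have hqE : 10 * (Real.exp ζ.re * Real.sin (ζ.im / 2) ^ 2)
      ≤ Real.exp ζ.re * (9 - Real.exp ζ.re) := by
    rw [Real.sin_sq_eq_half_sub, mul_div_cancel₀ _ two_ne_zero]
    nlinarith [exp_re_le_four_add_five_mul_cos_im hζ, Real.exp_pos ζ.re]
  have hre := one_add_exp_re_pos hζ
  calc 2 * ‖1 + exp ζ‖ ^ 2
      ≤ (1 + Real.exp ζ.re + Real.exp ζ.re * Real.sin (ζ.im / 2) ^ 2)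
          * (‖1 + exp ζ‖ + (1 + exp ζ).re) := by
        rw [one_add_exp_re]
        exact two_mul_sq_le_of_sq_eq (by positivity) hqE (norm_nonneg _) (norm_one_add_exp_sq ζ)
    _ ≤ (1 + Real.exp ‖ζ‖) * (‖1 + exp ζ‖ + (1 + exp ζ).re) := by
        rw [add_assoc]
        gcongr
        exact exp_add_exp_mul_sin_sq_le_exp_norm hζ

theorem two_div_one_add_exp_norm_le :
    2 / (1 + Real.exp ‖ζ‖) ≤ ‖(1 + exp ζ)⁻¹‖ + ((1 + exp ζ)⁻¹).re := by
  have hne : 0 < ‖1 + exp ζ‖ := (one_add_exp_re_pos hζ).trans_le (re_le_norm _)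
  calc 2 / (1 + Real.exp ‖ζ‖) ≤ (‖1 + exp ζ‖ + (1 + exp ζ).re) / ‖1 + exp ζ‖ ^ 2 := by
        rw [div_le_div_iff₀ (by positivity) (by positivity), mul_comm (_ + _) (1 + _)]
        exact two_mul_norm_one_add_exp_sq_le hζ
    _ = ‖(1 + exp ζ)⁻¹‖ + ((1 + exp ζ)⁻¹).re := by
        rw [norm_inv, inv_re, ← Complex.sq_norm]
        field_simp

end NormLeTwo

theorem one_add_tanh_eq {w : ℂ} (hw : 1 + exp (-2 * w) ≠ 0) :
    1 + tanh w = 2 * (1 + exp (-2 * w))⁻¹ := by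
  have hcosh : exp w + exp (-w) = exp w * (1 + exp (-2 * w)) := by
    rw [mul_add, mul_one, ← Complex.exp_add]
    ring_nf
  rw [tanh_eq_sinh_div_cosh, sinh, cosh, hcosh]
  generalize 1 + exp (-2 * w) = U at *
  field_simp [exp_ne_zero w]
  linear_combination -hcosh

theorem sqrt_two_div_le_re_bean {w : ℂ} (hw : ‖w‖ ≤ 1) :
    √(2 / (1 + Real.exp (2 * ‖w‖))) ≤ (Bean w).re := by
  have hnorm : ‖-2 * w‖ = 2 * ‖w‖ := by simp
  have hζ : ‖-2 * w‖ ≤ 2 := by linarith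
  have hU : 1 + exp (-2 * w) ≠ 0 := fun h => (one_add_exp_re_pos hζ).ne' (by rw [h, zero_re])
  rw [Bean, one_div, cpow_inv_two_re, one_add_tanh_eq hU, ← hnorm]
  refine Real.sqrt_le_sqrt ((two_div_one_add_exp_norm_le hζ).trans_eq ?_)
  simp only [norm_mul, Complex.norm_two, mul_re, re_ofNat, im_ofNat, zero_mul, sub_zero]
  ring

theorem Subord.sqrt_two_div_le_re {p : ℂ → ℂ} (h : Subord p Bean) {z : ℂ} (hz : z ∈ unitDisk) :
    √(2 / (1 + Real.exp (2 * ‖z‖))) ≤ (p z).re := by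
  obtain ⟨w, hwz, hpw⟩ := h.exists_norm_le hz
  calc √(2 / (1 + Real.exp (2 * ‖z‖))) ≤ √(2 / (1 + Real.exp (2 * ‖w‖))) := by gcongr
    _ ≤ (Bean w).re := sqrt_two_div_le_re_bean (hwz.trans (mem_ball_zero_iff.1 hz).le)
    _ = (p z).re := by rw [hpw]

theorem lt_sqrt_two_div_one_add_exp {α r : ℝ} (hα : 0 < α) (hα2 : α ^ 2 < 2)
    (hr : r < (1 / 2) * Real.log ((2 - α ^ 2) / α ^ 2)) :
    α < √(2 / (1 + Real.exp (2 * r))) := by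
  have hexp : Real.exp (2 * r) < (2 - α ^ 2) / α ^ 2 := by
    rw [← Real.lt_log_iff_exp_lt (div_pos (sub_pos.2 hα2) (by positivity))]
    linarith
  rw [lt_div_iff₀ (by positivity)] at hexp
  rw [Real.lt_sqrt hα.le, lt_div_iff₀ (by positivity)]
  linarith

theorem beanStarlikeOrderRadius_general (α : ℝ) (hα0 : 0 < α) (hα1 : α < 1)
    (p : ℂ → ℂ) (hsub : Subord p Bean) :
    ∀ z ∈ unitDisk, ‖z‖ < (1/2) * Real.log ((2 - α^2) / α^2) → α < (p z).re := fun _ hz hr =>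
  (lt_sqrt_two_div_one_add_exp hα0 (by nlinarith) hr).trans_le (hsub.sqrt_two_div_le_re hz)

/-- functions subordinate to 𝔅 are starlike of order α in
|z| < (1/2)·log((2−α²)/α²), for √(2/(1+e²)) < α < 1. -/
theorem beanStarlikeOrderRadius (α : ℝ)
    (hα0 : Real.sqrt (2 / (1 + Real.exp 1 ^ 2)) < α) (hα1 : α < 1)
    (p : ℂ → ℂ) (hp : AnalyticOnNhd ℂ p unitDisk) (hsub : Subord p Bean) :
    ∀ z ∈ unitDisk, ‖z‖ < (1/2) * Real.log ((2 - α^2) / α^2) → α < (p z).re :=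
  beanStarlikeOrderRadius_general α ((Real.sqrt_nonneg _).trans_lt hα0) hα1 p hsub
end
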